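/- arXiv:2111.10699 — 2 statements merged into one kernel-verified Lean document; each statement's English description precedes it below -/
import Mathlib

section
/- Let G = (V,E) be a finite simple graph and let M be a collection of open wedges of G that is pairwise pair-disjoint (no unordered vertex pair belongs to two wedges of M, where the pairs of a wedge (i,j,k) are {i,j}, {i,k}, {j,k}) and maximal with this property (every open wedge of G shares a pair with some wedge in M). Then there exists a partition of V with at most 6·|M| disagreements; moreover every partition of V has at least |M| disagreements, so this partition has at most 6·OPT^CE disagreements, where OPT^CE is the minimum number of disagreements over all partitions of V. -/
open Finset

/-- The finset of ordered pairs `(i, j)` with `i < j`, representing unordered pairs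
of distinct elements of `V`. -/
def pairsLt (V : Type*) [Fintype V] [LinearOrder V] : Finset (V × V) :=
  Finset.univ.filter fun p => p.1 < p.2

/-- `(i, j, k)` is an open wedge centered at `k`. -/
def IsOpenWedge {V : Type*} (G : SimpleGraph V) (i j k : V) : Prop :=
  G.Adj i k ∧ G.Adj j k ∧ i ≠ j ∧ ¬ G.Adj i j

/-- The number of disagreements of the partition `C` with respect to `G`. -/
def disagreements {V : Type*} [Fintype V] [LinearOrder V]
    (G : SimpleGraph V) [DecidableRel G.Adj] (C : V → ℕ) : ℕ :=
  ((pairsLt V).filter fun p =>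
    (G.Adj p.1 p.2 ∧ C p.1 ≠ C p.2) ∨ (¬ G.Adj p.1 p.2 ∧ C p.1 = C p.2)).card

/-- The three unordered vertex pairs of a wedge `(i, j, k)`. -/
def wedgePairs {V : Type*} [DecidableEq V] (t : V × V × V) : Finset (Sym2 V) :=
  {s(t.1, t.2.1), s(t.1, t.2.2), s(t.2.1, t.2.2)}

/-!
Every partition has a disagreement inside each open wedge, and the wedges of `M` share no pairs;
this is the lower bound. For the upper bound, let `D` be the graph of all pairs occurring in `M`,
so that `D` has at most `3 * #M` edges. Since `D` meets every open wedge of `G`, it also meets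
every open wedge of the graph `H = G ∆ D`, in which the status of the pairs in `D` is flipped.
Cluster `H` by pivoting: choose a vertex `k`, make it a cluster together with its `H`-neighbours,
and repeat on the remaining vertices. The pairs on which the choice of `k` disagrees with `H` are
exactly the pairs forming a bad triangle with `k`, that is, a triple spanning exactly two edges of
`H`. Every bad triangle contains a pair of `D`, so averaging over `k` yields a pivot for which at
least a third of these pairs lie in `D`. With such pivots, the number of disagreements with
`G = H ∆ D` is at most twice the number of edges of `D`.
-/

open scoped symmDiff

theorem card_symmDiff_le_two_mul_of_card_le_three_mul_card_inter {α : Type*} [DecidableEq α]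
    {s t : Finset α} (h : #s ≤ 3 * #(s ∩ t)) : #(s ∆ t) ≤ 2 * #t := by
  have hs : #(s \ t) + #(s ∩ t) = #s := card_sdiff_add_card_inter s t
  have ht : #(t \ s) + #(s ∩ t) = #t := inter_comm s t ▸ card_sdiff_add_card_inter t s
  have hunion : #(s ∆ t) ≤ #(s \ t) + #(t \ s) := card_union_le _ _
  lia

section Disagreements

variable {V : Type*}

theorem symmDiff_adj_iff {G H : SimpleGraph V} {i j : V} :
    (G ∆ H).Adj i j ↔ ¬(G.Adj i j ↔ H.Adj i j) := by
  rw [symmDiff_def, SimpleGraph.sup_adj, SimpleGraph.sdiff_adj, SimpleGraph.sdiff_adj]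
  tauto

theorem card_filter_pairsLt_adj [Fintype V] [LinearOrder V] (G : SimpleGraph V)
    [DecidableRel G.Adj] : #{p ∈ pairsLt V | G.Adj p.1 p.2} = #G.edgeFinset := by
  refine card_nbij (fun p => s(p.1, p.2)) ?_ ?_ ?_
  · intro p hp
    simpa using (mem_filter.1 hp).2
  · intro p hp q hq hpq
    simp only [pairsLt, coe_filter, mem_filter, Set.mem_ofPred_eq] at hp hq
    rcases Sym2.eq_iff.1 hpq with ⟨h₁, h₂⟩ | ⟨h₁, h₂⟩
    · exact Prod.ext h₁ h₂
    · exact absurd hp.1.2 (h₁ ▸ h₂ ▸ hq.1.2.not_gt)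
  · rintro ⟨i, j⟩ hij
    replace hij : G.Adj i j := by simpa using hij
    rcases hij.ne.lt_or_gt with hlt | hlt
    · exact ⟨(i, j), by simp [pairsLt, hlt, hij], rfl⟩
    · exact ⟨(j, i), by simp [pairsLt, hlt, hij.symm], Sym2.eq_swap⟩

/-- The cluster graph of the partition with labelling `C`: the disjoint union of the complete
graphs on its parts. The disagreements of `C` with `G` are the edges of `G ∆ clusterGraph C`. -/
def clusterGraph (C : V → ℕ) : SimpleGraph V where
  Adj i j := i ≠ j ∧ C i = C j
  symm := ⟨fun _ _ h => ⟨h.1.symm, h.2.symm⟩⟩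
  loopless := ⟨fun _ h => h.1 rfl⟩

theorem clusterGraph_adj {C : V → ℕ} {i j : V} :
    (clusterGraph C).Adj i j ↔ i ≠ j ∧ C i = C j :=
  Iff.rfl

open Classical in
theorem disagreements_eq_card_edgeFinset [Fintype V] [LinearOrder V] (G : SimpleGraph V)
    [DecidableRel G.Adj] (C : V → ℕ) :
    disagreements G C = #(G ∆ clusterGraph C).edgeFinset := by
  rw [← card_filter_pairsLt_adj, disagreements]
  congr 1
  refine filter_congr fun p hp => ?_
  have hne : p.1 ≠ p.2 := (mem_filter.1 hp).2.ne
  simp only [symmDiff_adj_iff, clusterGraph_adj]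
  tauto

end Disagreements

section LowerBound

variable {V : Type*}

theorem IsOpenWedge.exists_mem_wedgePairs_mem_edgeSet [DecidableEq V] {G : SimpleGraph V}
    {i j k : V} (h : IsOpenWedge G i j k) (C : V → ℕ) :
    ∃ e ∈ wedgePairs (i, j, k), e ∈ (G ∆ clusterGraph C).edgeSet := by
  obtain ⟨hik, hjk, hne, hij⟩ := h
  simp only [wedgePairs, mem_insert, mem_singleton, exists_eq_or_imp, exists_eq_left,
    SimpleGraph.mem_edgeSet, symmDiff_adj_iff, clusterGraph_adj]
  grind

theorem card_le_disagreements [Fintype V] [LinearOrder V] (G : SimpleGraph V)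
    [DecidableRel G.Adj] {M : Finset (V × V × V)}
    (hM : ∀ t ∈ M, IsOpenWedge G t.1 t.2.1 t.2.2)
    (hdisj : (M : Set (V × V × V)).PairwiseDisjoint wedgePairs) (C : V → ℕ) :
    #M ≤ disagreements G C := by
  classical
  rw [disagreements_eq_card_edgeFinset]
  refine card_le_card_of_forall_subsingleton (fun t e => e ∈ wedgePairs t) ?_ ?_
  · intro t ht
    obtain ⟨e, het, he⟩ := (hM t ht).exists_mem_wedgePairs_mem_edgeSet C
    exact ⟨e, by simpa using he, het⟩
  · rintro e - t ⟨ht, het⟩ t' ⟨ht', het'⟩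
    exact hdisj.elim_finset ht ht' e het het'

end LowerBound

section Pivot

variable {V : Type*}

/-- The vertices `i`, `j`, `k` span exactly two edges of `G`. Unlike `IsOpenWedge`, this does not
distinguish the centre of the wedge. -/
def IsBadTriangle (G : SimpleGraph V) (i j k : V) : Prop :=
  IsOpenWedge G i j k ∨ IsOpenWedge G j k i ∨ IsOpenWedge G k i j

theorem IsBadTriangle.rotate {G : SimpleGraph V} {i j k : V} (h : IsBadTriangle G i j k) :
    IsBadTriangle G j k i := by
  unfold IsBadTriangle at *
  tauto

open Classical in
theorem exists_mem_card_filter_le_three_mul {α : Type*} {T : α → α → α → Prop} {R : α → α → Prop}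
    (hrot : ∀ i j k, T i j k → T j k i) (hT : ∀ i j k, T i j k → R i j ∨ R j k ∨ R k i)
    {S : Finset α} (hS : S.Nonempty) :
    ∃ k ∈ S, #{p ∈ S ×ˢ S | T p.1 p.2 k} ≤ 3 * #{p ∈ S ×ˢ S | T p.1 p.2 k ∧ R p.1 p.2} := by
  apply exists_le_of_sum_le hS
  simp only [card_filter, sum_product, ← mul_sum]
  let f (i j k : α) : ℕ := if T i j k ∧ R i j then 1 else 0
  have hle (i j k : α) : (if T i j k then 1 else 0) ≤ f i j k + f j k i + f k i j := by
    grind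
  have sum_rotate (g : α → α → α → ℕ) :
      ∑ k ∈ S, ∑ i ∈ S, ∑ j ∈ S, g j k i = ∑ k ∈ S, ∑ i ∈ S, ∑ j ∈ S, g i j k := by
    rw [sum_comm]
    exact sum_congr rfl fun k _ => sum_comm
  calc ∑ k ∈ S, ∑ i ∈ S, ∑ j ∈ S, (if T i j k then 1 else 0)
      ≤ ∑ k ∈ S, ∑ i ∈ S, ∑ j ∈ S, (f i j k + f j k i + f k i j) := by
        gcongr with k _ i _ j _
        exact hle i j k
    _ = 3 * ∑ k ∈ S, ∑ i ∈ S, ∑ j ∈ S, f i j k := by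
        simp only [sum_add_distrib]
        rw [← sum_rotate fun i j k => f k i j, sum_rotate f]
        ring

/-- The cluster opened by the pivot `k`: the closed neighbourhood of `k` in `H`. -/
def pivotCluster (H : SimpleGraph V) (k : V) : Set V :=
  insert k (H.neighborSet k)

theorem mem_pivotCluster_iff {H : SimpleGraph V} {i k : V} :
    i ∈ pivotCluster H k ↔ i = k ∨ H.Adj k i :=
  Iff.rfl

open Classical in
/-- The clustering obtained from `C` by splitting off the cluster of the pivot `k`, which gets the
label `0`; all other labels are shifted by one. -/
noncomputable def pivotClustering (H : SimpleGraph V) (k : V) (C : V → ℕ) (i : V) : ℕ :=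
  if i ∈ pivotCluster H k then 0 else C i + 1

variable {H D : SimpleGraph V} {i j k : V} {S : Finset V}

theorem IsBadTriangle.mem_pivotCluster (h : IsBadTriangle H i j k) :
    i ∈ pivotCluster H k ∨ j ∈ pivotCluster H k := by
  simp only [IsBadTriangle, IsOpenWedge, mem_pivotCluster_iff] at *
  grind [SimpleGraph.adj_comm]

theorem symmDiff_clusterGraph_pivotClustering_adj_iff_isBadTriangle (C : V → ℕ)
    (h : i ∈ pivotCluster H k ∨ j ∈ pivotCluster H k) :
    (H ∆ clusterGraph (pivotClustering H k C)).Adj i j ↔ IsBadTriangle H i j k := by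
  have hcluster : pivotClustering H k C i = pivotClustering H k C j ↔
      i ∈ pivotCluster H k ∧ j ∈ pivotCluster H k := by
    unfold pivotClustering
    grind
  rw [symmDiff_adj_iff, clusterGraph_adj, hcluster]
  simp only [mem_pivotCluster_iff, IsBadTriangle, IsOpenWedge] at *
  grind [SimpleGraph.adj_comm, SimpleGraph.irrefl]

theorem clusterGraph_pivotClustering_adj_iff (C : V → ℕ)
    (hi : i ∉ pivotCluster H k) (hj : j ∉ pivotCluster H k) :
    (clusterGraph (pivotClustering H k C)).Adj i j ↔ (clusterGraph C).Adj i j := by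
  simp only [clusterGraph_adj, pivotClustering, if_neg hi, if_neg hj, Nat.add_right_cancel_iff]

open Classical in
theorem interedges_symmDiff_clusterGraph_pivotClustering_subset {R : Finset V}
    (hR : R = {i ∈ S | i ∉ pivotCluster H k}) (C : V → ℕ) :
    (H ∆ D ∆ clusterGraph (pivotClustering H k C)).interedges S S ⊆
      (H ∆ D ∆ clusterGraph C).interedges R R ∪
        {p ∈ S ×ˢ S | IsBadTriangle H p.1 p.2 k} ∆ (D.interedges S S \ D.interedges R R) := by
  rintro ⟨i, j⟩ hij
  obtain ⟨hi, hj, hadj⟩ := (SimpleGraph.mem_interedges_iff _).1 hij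
  have hiR : i ∈ R ↔ i ∉ pivotCluster H k := by simp [hR, hi]
  have hjR : j ∈ R ↔ j ∉ pivotCluster H k := by simp [hR, hj]
  by_cases hmem : i ∈ R ∧ j ∈ R
  · refine mem_union_left _ ((SimpleGraph.mem_interedges_iff _).2 ⟨hmem.1, hmem.2, ?_⟩)
    rwa [symmDiff_adj_iff, ← clusterGraph_pivotClustering_adj_iff C (hiR.1 hmem.1) (hjR.1 hmem.2),
      ← symmDiff_adj_iff]
  · have hdecided : i ∈ pivotCluster H k ∨ j ∈ pivotCluster H k := by
      rwa [hiR, hjR, not_and_or, not_not, not_not] at hmem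
    rw [symmDiff_right_comm, symmDiff_adj_iff,
      symmDiff_clusterGraph_pivotClustering_adj_iff_isBadTriangle C hdecided] at hadj
    simp only [mem_union, mem_symmDiff, mem_filter, mem_product, mem_sdiff,
      SimpleGraph.mem_interedges_iff]
    tauto

open Classical in
theorem filter_isBadTriangle_adj_subset {R : Finset V}
    (hR : R = {i ∈ S | i ∉ pivotCluster H k}) :
    {p ∈ S ×ˢ S | IsBadTriangle H p.1 p.2 k ∧ D.Adj p.1 p.2} ⊆
      {p ∈ S ×ˢ S | IsBadTriangle H p.1 p.2 k} ∩ (D.interedges S S \ D.interedges R R) := by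
  intro p hp
  obtain ⟨hpS, hbad, hadj⟩ := mem_filter.1 hp
  obtain ⟨hS₁, hS₂⟩ := mem_product.1 hpS
  refine mem_inter.2 ⟨mem_filter.2 ⟨hpS, hbad⟩, mem_sdiff.2
    ⟨(SimpleGraph.mem_interedges_iff _).2 ⟨hS₁, hS₂, hadj⟩, fun hpR => ?_⟩⟩
  obtain ⟨hR₁, hR₂, -⟩ := (SimpleGraph.mem_interedges_iff _).1 hpR
  subst hR
  exact hbad.mem_pivotCluster.elim (mem_filter.1 hR₁).2 (mem_filter.1 hR₂).2

open Classical in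
theorem card_interedges_symmDiff_clusterGraph_pivotClustering_le {R : Finset V}
    (hR : R = {i ∈ S | i ∉ pivotCluster H k})
    (hk : #{p ∈ S ×ˢ S | IsBadTriangle H p.1 p.2 k} ≤
      3 * #{p ∈ S ×ˢ S | IsBadTriangle H p.1 p.2 k ∧ D.Adj p.1 p.2})
    {C : V → ℕ} (hC : #((H ∆ D ∆ clusterGraph C).interedges R R) ≤ 2 * #(D.interedges R R)) :
    #((H ∆ D ∆ clusterGraph (pivotClustering H k C)).interedges S S) ≤
      2 * #(D.interedges S S) := by
  have hRS : R ⊆ S := hR ▸ filter_subset _ S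
  let B : Finset (V × V) := {p ∈ S ×ˢ S | IsBadTriangle H p.1 p.2 k}
  let Q : Finset (V × V) := D.interedges S S \ D.interedges R R
  have hBQ : #(B ∆ Q) ≤ 2 * #Q :=
    card_symmDiff_le_two_mul_of_card_le_three_mul_card_inter <|
      hk.trans (Nat.mul_le_mul_left 3 (card_le_card (filter_isBadTriangle_adj_subset hR)))
  calc #((H ∆ D ∆ clusterGraph (pivotClustering H k C)).interedges S S)
      ≤ #((H ∆ D ∆ clusterGraph C).interedges R R) + #(B ∆ Q) :=
        (card_le_card (interedges_symmDiff_clusterGraph_pivotClustering_subset hR C)).trans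
          (card_union_le _ _)
    _ ≤ 2 * #(D.interedges R R) + 2 * #Q := Nat.add_le_add hC hBQ
    _ = 2 * #(D.interedges S S) := by
        rw [← mul_add, add_comm,
          card_sdiff_add_card_eq_card (SimpleGraph.interedges_mono D hRS hRS)]

open Classical in
theorem exists_card_interedges_symmDiff_clusterGraph_le
    (hD : ∀ i j k, IsBadTriangle H i j k → D.Adj i j ∨ D.Adj j k ∨ D.Adj k i) (S : Finset V) :
    ∃ C : V → ℕ, #((H ∆ D ∆ clusterGraph C).interedges S S) ≤ 2 * #(D.interedges S S) := by
  induction S using Finset.strongInduction with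
  | H S ih =>
    rcases S.eq_empty_or_nonempty with rfl | hS
    · exact ⟨0, by simp⟩
    obtain ⟨k, hkS, hk⟩ := exists_mem_card_filter_le_three_mul (fun _ _ _ => .rotate) hD hS
    obtain ⟨C, hC⟩ := ih {i ∈ S | i ∉ pivotCluster H k}
      (filter_ssubset.2 ⟨k, hkS, by simp [mem_pivotCluster_iff]⟩)
    exact ⟨pivotClustering H k C,
      card_interedges_symmDiff_clusterGraph_pivotClustering_le rfl hk hC⟩

end Pivot

section UpperBound

variable {V : Type*}

theorem IsBadTriangle.adj_of_forall_isOpenWedge {G D : SimpleGraph V}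
    (hD : ∀ i j k, IsOpenWedge G i j k → D.Adj i j ∨ D.Adj i k ∨ D.Adj j k) {i j k : V}
    (h : IsBadTriangle (G ∆ D) i j k) : D.Adj i j ∨ D.Adj j k ∨ D.Adj k i := by
  by_contra! hnot
  obtain ⟨hij, hjk, hki⟩ := hnot
  have hGH : IsBadTriangle G i j k := by
    simp only [IsBadTriangle, IsOpenWedge, symmDiff_adj_iff] at h ⊢
    grind [SimpleGraph.adj_comm]
  rcases hGH with hw | hw | hw <;> grind [SimpleGraph.adj_comm]

theorem exists_disagreements_le_two_mul_card_edgeFinset [Fintype V] [LinearOrder V]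
    (G D : SimpleGraph V) [DecidableRel G.Adj] [Fintype D.edgeSet]
    (hD : ∀ i j k, IsOpenWedge G i j k → D.Adj i j ∨ D.Adj i k ∨ D.Adj j k) :
    ∃ C : V → ℕ, disagreements G C ≤ 2 * #D.edgeFinset := by
  classical
  obtain ⟨C, hC⟩ := exists_card_interedges_symmDiff_clusterGraph_le
    (fun _ _ _ h => h.adj_of_forall_isOpenWedge hD) univ
  have card_interedges_univ (A : SimpleGraph V) :
      #(A.interedges univ univ) = 2 * #A.edgeFinset := by
    rw [A.two_mul_card_edgeFinset, ← univ_product_univ]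
    rfl
  rw [symmDiff_symmDiff_cancel_right, card_interedges_univ, card_interedges_univ] at hC
  refine ⟨C, ?_⟩
  rw [disagreements_eq_card_edgeFinset]
  convert Nat.le_of_mul_le_mul_left hC two_pos

/-- The graph of the pairs occurring in the triples of `M`. Degenerate pairs `s(i, i)`, which do not
occur for wedges, are left out. -/
def wedgePairsGraph [DecidableEq V] (M : Finset (V × V × V)) : SimpleGraph V :=
  .fromEdgeSet (M.biUnion wedgePairs : Finset (Sym2 V))

theorem card_edgeFinset_wedgePairsGraph_le [DecidableEq V] (M : Finset (V × V × V))
    [Fintype (wedgePairsGraph M).edgeSet] : #(wedgePairsGraph M).edgeFinset ≤ 3 * #M := by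
  have hsub : (wedgePairsGraph M).edgeFinset ⊆ M.biUnion wedgePairs := fun e he => by
    rw [SimpleGraph.mem_edgeFinset, wedgePairsGraph, SimpleGraph.edgeSet_fromEdgeSet] at he
    exact he.1
  calc #(wedgePairsGraph M).edgeFinset
      ≤ #(M.biUnion wedgePairs) := card_le_card hsub
    _ ≤ #M * 3 := card_biUnion_le_card_mul M wedgePairs 3 fun _ _ => card_le_three
    _ = 3 * #M := mul_comm _ _

theorem IsOpenWedge.wedgePairsGraph_adj [DecidableEq V] {G : SimpleGraph V}
    {M : Finset (V × V × V)} {i j k : V} (h : IsOpenWedge G i j k)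
    (hM : ∃ t ∈ M, (wedgePairs (i, j, k) ∩ wedgePairs t).Nonempty) :
    (wedgePairsGraph M).Adj i j ∨ (wedgePairsGraph M).Adj i k ∨ (wedgePairsGraph M).Adj j k := by
  obtain ⟨hik, hjk, hne, -⟩ := h
  obtain ⟨t, ht, e, he⟩ := hM
  obtain ⟨hijk, het⟩ := mem_inter.1 he
  have heM : e ∈ M.biUnion wedgePairs := mem_biUnion.2 ⟨t, ht, het⟩
  simp only [wedgePairs, mem_insert, mem_singleton] at hijk
  simp only [wedgePairsGraph, SimpleGraph.fromEdgeSet_adj, mem_coe]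
  rcases hijk with rfl | rfl | rfl
  · exact .inl ⟨heM, hne⟩
  · exact .inr (.inl ⟨heM, hik.ne⟩)
  · exact .inr (.inr ⟨heM, hjk.ne⟩)

theorem exists_disagreements_le_six_mul_card [Fintype V] [LinearOrder V] (G : SimpleGraph V)
    [DecidableRel G.Adj] {M : Finset (V × V × V)}
    (hmax : ∀ i j k, IsOpenWedge G i j k →
      ∃ t ∈ M, (wedgePairs (i, j, k) ∩ wedgePairs t).Nonempty) :
    ∃ C : V → ℕ, disagreements G C ≤ 6 * #M := by
  classical
  obtain ⟨C, hC⟩ := exists_disagreements_le_two_mul_card_edgeFinset G (wedgePairsGraph M)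
    fun i j k h => h.wedgePairsGraph_adj (hmax i j k h)
  have hcard := card_edgeFinset_wedgePairsGraph_le M
  exact ⟨C, by lia⟩

end UpperBound

/-- A maximal pair-disjoint collection `M` of open wedges yields a partition with at most
`6·|M|` disagreements; moreover `|M|` lower bounds the disagreements of every partition, so
this partition is a 6-approximation for cluster editing. -/
theorem stmt5 {V : Type*} [Fintype V] [LinearOrder V]
    (G : SimpleGraph V) [DecidableRel G.Adj]
    (M : Finset (V × V × V))
    (hM : ∀ t ∈ M, IsOpenWedge G t.1 t.2.1 t.2.2)
    (hdisj : ∀ t₁ ∈ M, ∀ t₂ ∈ M, t₁ ≠ t₂ → Disjoint (wedgePairs t₁) (wedgePairs t₂))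
    (hmax : ∀ i j k : V, IsOpenWedge G i j k →
      ∃ t ∈ M, (wedgePairs (i, j, k) ∩ wedgePairs t).Nonempty) :
    ∃ C : V → ℕ, disagreements G C ≤ 6 * M.card ∧
      (∀ C' : V → ℕ, M.card ≤ disagreements G C') ∧
      disagreements G C ≤ 6 * sInf {n : ℕ | ∃ C' : V → ℕ, n = disagreements G C'} := by
  obtain ⟨C, hC⟩ := exists_disagreements_le_six_mul_card G hmax
  have hlower : ∀ C' : V → ℕ, #M ≤ disagreements G C' := card_le_disagreements G hM hdisj
  obtain ⟨Copt, hopt⟩ := Nat.sInf_mem (s := {n : ℕ | ∃ C' : V → ℕ, n = disagreements G C'})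
    ⟨_, C, rfl⟩
  exact ⟨C, hC, hlower, hC.trans (hopt ▸ Nat.mul_le_mul_left 6 (hlower Copt))⟩
end

section
/- Let G = (V,E) be a finite simple graph and let E_W ⊆ E be an STC labeling of G, i.e., for every open wedge (i,j,k) centered at k at least one of the edges {i,k}, {j,k} belongs to E_W. Then there exists a partition of V into cliques of G whose number of cut edges is at most 2·|E_W|. -/
open Finset

/-- `C` is a partition of the vertex set into cliques of `G`. -/
def IsCliquePartition {V : Type*} (G : SimpleGraph V) (C : V → ℕ) : Prop :=
  ∀ i j, i ≠ j → C i = C j → G.Adj i j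

/-- The number of cut edges of a partition `C`. -/
def cutEdges {V : Type*} [Fintype V] [LinearOrder V]
    (G : SimpleGraph V) [DecidableRel G.Adj] (C : V → ℕ) : ℕ :=
  ((pairsLt V).filter fun p => G.Adj p.1 p.2 ∧ C p.1 ≠ C p.2).card

/-!
Call the edges in `E_W` weak and the other edges strong; two strong edges at a common vertex
span a triangle. Hence a vertex `k` together with its strong neighbours is a clique. If this clique
is split off as a part, every strong edge `jl` that is cut joins a strong neighbour `j` of `k` to a
weak neighbour `l` of `k`. Exchanging the roles of `j` and `k` turns such a triangle into the weak
edge `kl` with both ends strong neighbours of `j`. Summed over all pivots `k`, the strong edges cut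
are therefore at most the ordered weak pairs inside the clique, so for some pivot they are at most
twice the weak edges inside. The only other cut edges are the weak edges that leave the clique, and
recursion on the remaining vertices gives the factor `2`.
-/

section Interedges

variable {V : Type*} (G H : SimpleGraph V) [DecidableRel G.Adj] [DecidableRel H.Adj]

lemma card_interedges_eq_sum (s t : Finset V) :
    #(G.interedges s t) = ∑ a ∈ s, #{b ∈ t | G.Adj a b} := by
  simp only [SimpleGraph.interedges_def, card_filter, sum_product]

lemma card_interedges_univ [Fintype V] [Fintype G.edgeSet] :
    #(G.interedges univ univ) = 2 * #G.edgeFinset := by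
  rw [SimpleGraph.interedges_def, univ_product_univ]
  convert G.two_mul_card_edgeFinset.symm

lemma card_interedges_le_sdiff_add [DecidableRel (G \ H).Adj] (s t : Finset V) :
    #(G.interedges s t) ≤ #((G \ H).interedges s t) + #(H.interedges s t) := by
  classical
  refine (card_le_card fun p hp => ?_).trans (card_union_le _ _)
  simp only [mem_union, SimpleGraph.mem_interedges_iff, SimpleGraph.sdiff_adj] at hp ⊢
  tauto

lemma card_interedges_self_eq_of_subset [DecidableEq V] {K U : Finset V} (hK : K ⊆ U) :
    #(G.interedges U U) = #(G.interedges (U \ K) (U \ K)) + #(G.interedges K K)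
      + 2 * #(G.interedges K (U \ K)) := by
  have split_left (t : Finset V) :
      #(G.interedges U t) = #(G.interedges (U \ K) t) + #(G.interedges K t) := by
    simp only [card_interedges_eq_sum, sum_sdiff hK]
  have comm (s t : Finset V) : #(G.interedges s t) = #(G.interedges t s) :=
    have := G.symm
    Rel.card_interedges_comm s t
  rw [split_left, comm (U \ K) U, comm K U, split_left, split_left, comm (U \ K) K]
  ring

end Interedges

section Pivot

variable {V : Type*} (S W : SimpleGraph V) [DecidableRel S.Adj] [DecidableRel W.Adj]

/-- The neighbours of `k` in `S` that lie in `U`. The rounding removes cliques from the vertex set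
one at a time, and `U` is the set of vertices not removed yet. -/
def neighborsIn (U : Finset V) (k : V) : Finset V := {v ∈ U | S.Adj k v}

variable {S} in
@[simp]
lemma mem_neighborsIn {U : Finset V} {k v : V} : v ∈ neighborsIn S U k ↔ v ∈ U ∧ S.Adj k v :=
  mem_filter

lemma sum_card_interedges_neighborsIn (U : Finset V) :
    ∑ k ∈ U, #(S.interedges (neighborsIn S U k) (neighborsIn W U k)) =
      ∑ k ∈ U, #(W.interedges (neighborsIn S U k) (neighborsIn S U k)) := by
  simp only [card_interedges_eq_sum]
  calc ∑ k ∈ U, ∑ j ∈ neighborsIn S U k, #{l ∈ neighborsIn W U k | S.Adj j l}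
    _ = ∑ j ∈ U, ∑ k ∈ neighborsIn S U j, #{l ∈ neighborsIn W U k | S.Adj j l} :=
      sum_comm' fun k j => by simp only [mem_neighborsIn, S.adj_comm]; tauto
    _ = ∑ j ∈ U, ∑ k ∈ neighborsIn S U j, #{l ∈ neighborsIn S U j | W.Adj k l} := by
      simp only [neighborsIn, filter_filter, and_comm]

lemma exists_card_interedges_neighborsIn_le {U : Finset V} (hU : U.Nonempty) :
    ∃ k ∈ U, #(S.interedges (neighborsIn S U k) (neighborsIn W U k)) ≤
      #(W.interedges (neighborsIn S U k) (neighborsIn S U k)) :=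
  exists_le_of_sum_le hU (sum_card_interedges_neighborsIn S W U).le

end Pivot

/-- The edges of `W` form an STC labeling of `G`. The labeled edges are bundled as a graph on the
vertices of `G`, which is not required to be a subgraph of `G`. -/
def IsSTCLabeling {V : Type*} (G W : SimpleGraph V) : Prop :=
  ∀ i j k, IsOpenWedge G i j k → W.Adj i k ∨ W.Adj j k

section StrongCluster

variable {V : Type*} {G W : SimpleGraph V}

lemma IsSTCLabeling.adj_of_strong (h : IsSTCLabeling G W) {i j k : V} (hij : i ≠ j)
    (hi : (G \ W).Adj k i) (hj : (G \ W).Adj k j) : G.Adj i j := by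
  by_contra hadj
  rcases h i j k ⟨hi.1.symm, hj.1.symm, hij, hadj⟩ with hw | hw
  · exact hi.2 hw.symm
  · exact hj.2 hw.symm

variable [DecidableEq V] [DecidableRel G.Adj] [DecidableRel W.Adj]

variable (G W) in
/-- The part split off at the pivot `k`: `k` and its neighbours in `U` along strong edges. -/
def strongCluster (U : Finset V) (k : V) : Finset V := insert k (neighborsIn (G \ W) U k)

lemma strongCluster_subset {U : Finset V} {k : V} (hk : k ∈ U) : strongCluster G W U k ⊆ U :=
  insert_subset hk (filter_subset _ _)

lemma IsSTCLabeling.isClique_strongCluster (h : IsSTCLabeling G W) (U : Finset V) (k : V) :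
    G.IsClique (strongCluster G W U k) := by
  rw [strongCluster, coe_insert, SimpleGraph.isClique_insert]
  refine ⟨fun i hi j hj hij => ?_, fun j hj _ => ?_⟩
  · exact h.adj_of_strong hij (mem_neighborsIn.1 hi).2 (mem_neighborsIn.1 hj).2
  · exact (mem_neighborsIn.1 hj).2.1

lemma IsSTCLabeling.interedges_strongCluster_subset (h : IsSTCLabeling G W) (U : Finset V) (k : V) :
    (G \ W).interedges (strongCluster G W U k) (U \ strongCluster G W U k) ⊆
      (G \ W).interedges (neighborsIn (G \ W) U k) (neighborsIn W U k) := by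
  rintro ⟨j, l⟩ hjl
  simp only [SimpleGraph.mk_mem_interedges_iff, strongCluster, mem_sdiff, mem_insert,
    mem_neighborsIn, not_or, not_and] at hjl ⊢
  obtain ⟨hj, ⟨hlU, hlk, hl⟩, hadj⟩ := hjl
  obtain rfl | ⟨hjU, hkj⟩ := hj
  · exact absurd hadj (hl hlU)
  · have hkl : G.Adj k l := h.adj_of_strong (Ne.symm hlk) hkj.symm hadj
    exact ⟨⟨hjU, hkj⟩, ⟨hlU, not_not.1 fun hw => hl hlU ⟨hkl, hw⟩⟩, hadj⟩

lemma IsSTCLabeling.exists_card_interedges_strongCluster_le (h : IsSTCLabeling G W)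
    {U : Finset V} (hU : U.Nonempty) :
    ∃ k ∈ U, #((G \ W).interedges (strongCluster G W U k) (U \ strongCluster G W U k)) ≤
      #(W.interedges (strongCluster G W U k) (strongCluster G W U k)) := by
  obtain ⟨k, hk, hle⟩ := exists_card_interedges_neighborsIn_le (G \ W) W hU
  have hsub : neighborsIn (G \ W) U k ⊆ strongCluster G W U k := subset_insert _ _
  exact ⟨k, hk, (card_le_card (h.interedges_strongCluster_subset U k)).trans
    (hle.trans (card_le_card (W.interedges_mono hsub hsub)))⟩

end StrongCluster

section CutGraph

variable {V : Type*} (G : SimpleGraph V)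

/-- The graph formed by the edges of `G` cut by the partition `C`. -/
def cutGraph (C : V → ℕ) : SimpleGraph V := G ⊓ (⊤ : SimpleGraph ℕ).comap C

variable {G} in
lemma cutGraph_adj {C : V → ℕ} {a b : V} : (cutGraph G C).Adj a b ↔ G.Adj a b ∧ C a ≠ C b :=
  Iff.rfl

instance [DecidableRel G.Adj] (C : V → ℕ) : DecidableRel (cutGraph G C).Adj :=
  fun a b => inferInstanceAs (Decidable (G.Adj a b ∧ C a ≠ C b))

variable [DecidableEq V]

/-- The partition with `K` as one part and with the other parts of `C` cut down to the complement
of `K`; shifting the labels of `C` frees the label `0` for `K`. -/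
def splitOff (K : Finset V) (C : V → ℕ) (v : V) : ℕ := if v ∈ K then 0 else C v + 1

variable {G} in
lemma pairwise_splitOff {K U : Finset V} {C : V → ℕ} (hK : G.IsClique K)
    (hC : (↑(U \ K) : Set V).Pairwise fun i j => C i = C j → G.Adj i j) :
    (U : Set V).Pairwise fun i j => splitOff K C i = splitOff K C j → G.Adj i j := by
  intro i hi j hj hij heq
  by_cases hiK : i ∈ K <;> by_cases hjK : j ∈ K <;>
    simp only [splitOff, hiK, hjK, if_true, if_false] at heq
  · exact hK hiK hjK hij
  · omega
  · omega
  · exact hC (by simp_all) (by simp_all) hij (by omega)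

variable [DecidableRel G.Adj]

lemma card_interedges_cutGraph_splitOff_le {K U : Finset V} (hK : K ⊆ U) (C : V → ℕ) :
    #((cutGraph G (splitOff K C)).interedges U U) ≤
      #((cutGraph G C).interedges (U \ K) (U \ K)) + 2 * #(G.interedges K (U \ K)) := by
  have inside : (cutGraph G (splitOff K C)).interedges K K = ∅ := by
    refine filter_eq_empty_iff.2 fun p hp hcut => hcut.2 ?_
    simp only [splitOff, (mem_product.1 hp).1, (mem_product.1 hp).2, if_true]
  have outside : (cutGraph G (splitOff K C)).interedges (U \ K) (U \ K) =
      (cutGraph G C).interedges (U \ K) (U \ K) := by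
    refine filter_congr fun p hp => ?_
    obtain ⟨h₁, h₂⟩ := mem_product.1 hp
    simp only [cutGraph_adj, splitOff, (mem_sdiff.1 h₁).2, (mem_sdiff.1 h₂).2, if_false, ne_eq,
      Nat.add_right_cancel_iff]
  have across : #((cutGraph G (splitOff K C)).interedges K (U \ K)) ≤ #(G.interedges K (U \ K)) :=
    card_le_card (monotone_filter_right _ fun _ _ hcut => hcut.1)
  rw [card_interedges_self_eq_of_subset _ hK, inside, outside, card_empty]
  omega

end CutGraph

section Rounding

variable {V : Type*} {G W : SimpleGraph V} [DecidableRel G.Adj]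

lemma IsSTCLabeling.exists_pairwise_card_interedges_cutGraph_le [DecidableRel W.Adj]
    (h : IsSTCLabeling G W) (U : Finset V) :
    ∃ C : V → ℕ, ((U : Set V).Pairwise fun i j => C i = C j → G.Adj i j) ∧
      #((cutGraph G C).interedges U U) ≤ 2 * #(W.interedges U U) := by
  classical
  induction U using Finset.strongInduction with
  | H U ih =>
    obtain rfl | hU := U.eq_empty_or_nonempty
    · exact ⟨fun _ => 0, by simp, by simp⟩
    obtain ⟨k, hk, hpivot⟩ := h.exists_card_interedges_strongCluster_le hU
    set K := strongCluster G W U k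
    have hKU : K ⊆ U := strongCluster_subset hk
    obtain ⟨C, hC, hcut⟩ := ih (U \ K) (sdiff_ssubset hKU ⟨k, mem_insert_self _ _⟩)
    refine ⟨splitOff K C, pairwise_splitOff (h.isClique_strongCluster U k) hC, ?_⟩
    have hleave : #(G.interedges K (U \ K)) ≤ #(W.interedges K K) + #(W.interedges K (U \ K)) :=
      (card_interedges_le_sdiff_add G W K (U \ K)).trans (Nat.add_le_add_right hpivot _)
    calc #((cutGraph G (splitOff K C)).interedges U U)
      _ ≤ #((cutGraph G C).interedges (U \ K) (U \ K)) + 2 * #(G.interedges K (U \ K)) :=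
        card_interedges_cutGraph_splitOff_le G hKU C
      _ ≤ 2 * #(W.interedges (U \ K) (U \ K)) +
          2 * (#(W.interedges K K) + #(W.interedges K (U \ K))) := by gcongr
      _ ≤ 2 * #(W.interedges U U) := by
        rw [card_interedges_self_eq_of_subset W hKU]
        omega

lemma IsSTCLabeling.exists_isCliquePartition_card_cutGraph_le [Fintype V]
    [Fintype W.edgeSet] (h : IsSTCLabeling G W) :
    ∃ C : V → ℕ, IsCliquePartition G C ∧ #(cutGraph G C).edgeFinset ≤ 2 * #W.edgeFinset := by
  classical
  obtain ⟨C, hC, hcut⟩ := h.exists_pairwise_card_interedges_cutGraph_le univ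
  rw [card_interedges_univ, card_interedges_univ] at hcut
  exact ⟨C, fun i j => hC (mem_coe.2 (mem_univ i)) (mem_coe.2 (mem_univ j)), by omega⟩

end Rounding

lemma cutEdges_le_card_edgeFinset_cutGraph {V : Type*} [Fintype V] [LinearOrder V]
    (G : SimpleGraph V) [DecidableRel G.Adj] (C : V → ℕ) :
    cutEdges G C ≤ #(cutGraph G C).edgeFinset := by
  refine card_le_card_of_injOn (fun p => s(p.1, p.2)) (fun p hp => ?_) fun p hp q hq hpq => ?_
  · exact SimpleGraph.mem_edgeFinset.2 (mem_filter.1 hp).2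
  · have hp_lt : p.1 < p.2 := (mem_filter.1 (mem_filter.1 hp).1).2
    have hq_lt : q.1 < q.2 := (mem_filter.1 (mem_filter.1 hq).1).2
    obtain h | ⟨h₁, h₂⟩ := Sym2.eq_iff.1 hpq
    · exact Prod.ext h.1 h.2
    · exact absurd (h₁ ▸ h₂ ▸ hp_lt) hq_lt.not_gt

lemma card_edgeFinset_fromEdgeSet_le {V : Type*} (E : Finset (Sym2 V))
    [Fintype (SimpleGraph.fromEdgeSet (E : Set (Sym2 V))).edgeSet] :
    #(SimpleGraph.fromEdgeSet (E : Set (Sym2 V))).edgeFinset ≤ #E := by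
  refine card_le_card fun e he => ?_
  rw [SimpleGraph.mem_edgeFinset, SimpleGraph.edgeSet_fromEdgeSet] at he
  exact he.1

/-- Theorem: any STC labeling `E_W` of `G` can be rounded into a clique partition with at
most `2·|E_W|` cut edges. -/
theorem stmt6 {V : Type*} [Fintype V] [LinearOrder V]
    (G : SimpleGraph V) [DecidableRel G.Adj]
    (EW : Finset (Sym2 V))
    (hEW : ∀ e ∈ EW, e ∈ G.edgeSet)
    (hlabel : ∀ i j k : V, IsOpenWedge G i j k → s(i, k) ∈ EW ∨ s(j, k) ∈ EW) :
    ∃ C : V → ℕ, IsCliquePartition G C ∧ cutEdges G C ≤ 2 * EW.card := by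
  classical
  have hSTC : IsSTCLabeling G (SimpleGraph.fromEdgeSet EW) := by
    intro i j k hijk
    exact (hlabel i j k hijk).imp (⟨·, hijk.1.ne⟩) (⟨·, hijk.2.1.ne⟩)
  obtain ⟨C, hC, hcut⟩ := hSTC.exists_isCliquePartition_card_cutGraph_le
  exact ⟨C, hC, (cutEdges_le_card_edgeFinset_cutGraph G C).trans <|
    hcut.trans <| Nat.mul_le_mul_left 2 (card_edgeFinset_fromEdgeSet_le EW)⟩
end
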